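/- The saturation of J_n + ⟨p_n⟩ with respect to the product of all variables equals J_n together with the polynomials p^+_{n,j}: ( J_n + ⟨p_n⟩ ) : ( ∏_{(j,k) ∈ P} x_{jk} )^∞ = J_n + ⟨ p^+_{n,j} : j ∈ [n] ⟩. In particular, for n even the right-hand side is J_n + ⟨p^+_n⟩ with the single polynomial p^+_n. -/

import Mathlib

open scoped BigOperators

namespace Veronese

open MvPolynomial

/-- `c m = C(m,2)`. -/
def c (m : ℕ) : ℕ := m.choose 2

variable (n : ℕ)

/-- multiplicity (as ℤ) of the index `i` in the unordered pair `s`. -/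
def wt (s : Sym2 (Fin n)) : Fin n → ℤ :=
  Sym2.lift ⟨fun a b i => (if i = a then 1 else 0) + (if i = b then 1 else 0),
    fun a b => funext fun i => add_comm _ _⟩ s

/-- The Veronese grading map `V_n : ℤ^P → ℤ^n`, sending `e_{ij} ↦ e_i + e_j`. -/
def Vmap : (Sym2 (Fin n) → ℤ) →ₗ[ℤ] (Fin n → ℤ) where
  toFun u := fun i => ∑ s : Sym2 (Fin n), u s * wt n s i
  map_add' u v := funext fun i => by
    simp [add_mul, Finset.sum_add_distrib]
  map_smul' m u := funext fun i => by
    simp [Finset.mul_sum, smul_eq_mul, mul_assoc]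

/-- The Veronese lattice `L_n = ker V_n`. -/
def Llat : Submodule ℤ (Sym2 (Fin n) → ℤ) := LinearMap.ker (Vmap n)

/-- standard basis vector `e_{ij}` of `ℤ^P`. -/
def e (i j : Fin n) : Sym2 (Fin n) → ℤ := Pi.single s(i, j) 1

lemma e_comm (i j : Fin n) : e n i j = e n j i := by
  unfold e; rw [Sym2.eq_swap]

/-- `[ij|ij] = e_{ii} + e_{jj} - 2 e_{ij}`. -/
def minorVec (i j : Fin n) : Sym2 (Fin n) → ℤ := e n i i + e n j j - 2 • e n i j

/-- The principal minor lattice `L'_n`. -/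
def L'lat : Submodule ℤ (Sym2 (Fin n) → ℤ) :=
  Submodule.span ℤ {v | ∃ i j : Fin n, i < j ∧ v = minorVec n i j}

/-- the last index `n` (zero-based: `n-1`) of `Fin n`. -/
def lastIdx (hn : 0 < n) : Fin n := ⟨n - 1, Nat.sub_lt hn one_pos⟩

/-- embedding `[n-1] → [n]`. -/
def ι : Fin (n - 1) → Fin n := Fin.castLE (Nat.sub_le n 1)

/-- `[in|jn] = e_{ij} + e_{nn} - e_{in} - e_{jn}` for `i,j ∈ [n-1]`. -/
def Bvec (hn : 0 < n) : Sym2 (Fin (n - 1)) → (Sym2 (Fin n) → ℤ) :=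
  Sym2.lift ⟨fun i j =>
      e n (ι n i) (ι n j) + e n (lastIdx n hn) (lastIdx n hn)
        - e n (ι n i) (lastIdx n hn) - e n (ι n j) (lastIdx n hn),
    fun i j => by dsimp only; rw [e_comm n (ι n i) (ι n j)]; ring⟩

/-- The family `B'`: `[in|in]` on the diagonal, `2[in|jn]` off it. -/
noncomputable def B'vec (hn : 0 < n) (s : Sym2 (Fin (n - 1))) : Sym2 (Fin n) → ℤ :=
  if s.IsDiag then Bvec n hn s else 2 • Bvec n hn s

/-- multiplicity (as ℕ) of the index `i` in the unordered pair `s`. -/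
def wtN (s : Sym2 (Fin n)) : Fin n → ℕ :=
  Sym2.lift ⟨fun a b i => (if i = a then 1 else 0) + (if i = b then 1 else 0),
    fun a b => funext fun i => add_comm _ _⟩ s

/-- The Veronese degree of an exponent vector `u ∈ ℕ^P`. -/
def VN (u : Sym2 (Fin n) →₀ ℕ) : Fin n → ℕ := fun i => ∑ s : Sym2 (Fin n), u s * wtN n s i

/-- The fiber `V_n^{-1}[b] = {u ∈ ℕ^P : V_n u = b}`. -/
def fiber (b : Fin n → ℕ) : Set (Sym2 (Fin n) →₀ ℕ) := {u | VN n u = b}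

/-- natural inclusion `ℕ^P → ℤ^P`. -/
def toZ (u : Sym2 (Fin n) →₀ ℕ) : Sym2 (Fin n) → ℤ := fun s => (u s : ℤ)

lemma fiber_finite (b : Fin n → ℕ) : (fiber n b).Finite := by
  classical
  have hsub : fiber n b ⊆
      ↑(Finset.Iic ((Finsupp.equivFunOnFinite.symm fun _ => ∑ i, b i) : Sym2 (Fin n) →₀ ℕ)) := by
    intro u hu
    simp only [Finset.coe_Iic, Set.mem_Iic, Finsupp.le_def]
    intro s
    induction s using Sym2.ind with
    | _ i j =>
      have h1 : u s(i, j) * wtN n s(i, j) i ≤ VN n u i :=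
        Finset.single_le_sum (f := fun s => u s * wtN n s i)
          (fun s _ => Nat.zero_le _) (Finset.mem_univ s(i, j))
      have h2 : 1 ≤ wtN n s(i, j) i := by
        simp only [wtN, Sym2.lift_mk, if_pos rfl]
        exact Nat.le_add_right 1 _
      have h3 : u s(i, j) ≤ b i := by
        have hb : VN n u i = b i := congrFun hu i
        calc u s(i, j) ≤ u s(i, j) * wtN n s(i, j) i := Nat.le_mul_of_pos_right _ h2
          _ ≤ VN n u i := h1
          _ = b i := hb
      calc u s(i, j) ≤ b i := h3
        _ ≤ ∑ i, b i := Finset.single_le_sum (fun _ _ => Nat.zero_le _) (Finset.mem_univ _)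
        _ = (Finsupp.equivFunOnFinite.symm fun _ => ∑ i, b i) s(i, j) := by
            simp
  exact Set.Finite.subset (Finset.finite_toSet _) hsub

variable (k : Type*) [Field k]

/-- the polynomial ring `k[x_{ij}]`. -/
abbrev R := MvPolynomial (Sym2 (Fin n)) k

/-- The principal minor ideal `J_n`. -/
noncomputable def Jideal : Ideal (R n k) :=
  Ideal.span {f | ∃ i j : Fin n, i < j ∧ f = X s(i, i) * X s(j, j) - X s(i, j) ^ 2}

/-- The map `x_{ij} ↦ t_i t_j`. -/
noncomputable def veroHom : R n k →ₐ[k] MvPolynomial (Fin n) k :=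
  aeval fun s => Sym2.lift ⟨fun a b => X a * X b, fun a b => mul_comm _ _⟩ s

/-- The second Veronese ideal `I_n`. -/
noncomputable def Iideal : Ideal (R n k) := RingHom.ker (veroHom n k)

/-- A ℤ₂-twisting: an automorphism sending each variable to ± itself. -/
def IsTwisting (φ : R n k ≃ₐ[k] R n k) : Prop :=
  ∀ s : Sym2 (Fin n), φ (X s) = X s ∨ φ (X s) = - X s

/-- `f` is V_n-homogeneous of degree `b`. -/
def VHomog (f : R n k) (b : Fin n → ℕ) : Prop := ∀ u ∈ f.support, VN n u = b

/-- The fiber over `b` as a finite set. -/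
noncomputable def fiberFinset (b : Fin n → ℕ) : Finset (Sym2 (Fin n) →₀ ℕ) :=
  (fiber_finite n b).toFinset

/-- generating function of the canonical (0/1 off-diagonal) representatives of
the fiber over `b`. -/
noncomputable def pplusAt (b : Fin n → ℕ) : R n k :=
  ∑ u ∈ (fiberFinset n b).filter (fun u => ∀ s : Sym2 (Fin n), ¬s.IsDiag → u s ≤ 1),
    monomial u (1 : k)

/-- `p⁺_{n,j}` (for `n` odd): fiber over `(n-2,…,n-2) + e_j`. -/
noncomputable def pplusOdd (j : Fin n) : R n k :=
  pplusAt n k fun i => (n - 2) + if i = j then 1 else 0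

/-- `p⁺_n` (for `n` even): fiber over `(n-2,…,n-2)`. -/
noncomputable def pplusEven : R n k :=
  pplusAt n k fun _ => n - 2

/-- `p_n = ∏_{i<j∈[n-1]} (x_{ij} x_{nn} + x_{in} x_{jn})`. -/
noncomputable def pn (hn : 0 < n) : R n k :=
  ∏ p ∈ Finset.univ.filter (fun p : Fin (n - 1) × Fin (n - 1) => p.1 < p.2),
    (X s(ι n p.1, ι n p.2) * X s(lastIdx n hn, lastIdx n hn)
      + X s(ι n p.1, lastIdx n hn) * X s(ι n p.2, lastIdx n hn))


/-- the `V_n`-degree of `p⁺_{n,j}`: `(n-2,…,n-2) + e_j` if `n` is odd,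
`(n-2,…,n-2)` if `n` is even. -/
def bsel (j : Fin n) : Fin n → ℕ :=
  fun i => if n % 2 = 1 then (n - 2) + (if i = j then 1 else 0) else n - 2

/-- the polynomial `p⁺_{n,j}` (independent of `j` for `n` even). -/
noncomputable def pplus (j : Fin n) : R n k := pplusAt n k (bsel n j)

/-- The monoid carrying the fine grading: Veronese degree and off-diagonal parities. -/
abbrev MM := (Fin n → ℕ) × (Sym2 (Fin n) → ZMod 2)

/-- off-diagonal parities of an exponent vector -/
def parF (u : Sym2 (Fin n) →₀ ℕ) : Sym2 (Fin n) → ZMod 2 :=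
  fun s => if s.IsDiag then 0 else (u s : ZMod 2)

lemma sum_wtN {S : Type*} [CommSemiring S] (f : Sym2 (Fin n) → S) (i : Fin n) :
    ∑ s : Sym2 (Fin n), f s * (wtN n s i : S) = ∑ j, f s(i, j) + f s(i, i) := by
  classical
  have h1 : ∀ s : Sym2 (Fin n), f s * (wtN n s i : S) =
      (if i ∈ s then f s else 0) + (if s = s(i, i) then f s else 0) := by
    intro s
    induction s using Sym2.ind with
    | _ a b =>
      simp only [wtN, Sym2.lift_mk, Sym2.mem_iff, Sym2.eq_iff]
      by_cases ha : i = a <;> by_cases hb : i = b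
      · subst ha; subst hb; simp [mul_two]
      · subst ha; simp [hb, Ne.symm hb]
      · subst hb; simp [ha, Ne.symm ha]
      · simp [ha, hb, Ne.symm hb]
  simp_rw [h1]
  rw [Finset.sum_add_distrib]
  congr 1
  · rw [← Finset.sum_filter]
    symm
    apply Finset.sum_bij (fun j _ => s(i, j))
    · intro j _; simp
    · intro a _ b _ h
      simp only [Sym2.eq_iff] at h
      rcases h with ⟨_, h⟩ | ⟨h1, h2⟩
      · exact h
      · rw [h2, h1]
    · intro s hs
      simp only [Finset.mem_filter, Finset.mem_univ, true_and] at hs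
      obtain ⟨j, hj⟩ := Sym2.mem_iff_exists.1 hs
      exact ⟨j, Finset.mem_univ _, hj.symm⟩
    · intro j _; rfl
  · simp

lemma VN_eq (u : Sym2 (Fin n) →₀ ℕ) (i : Fin n) :
    VN n u i = ∑ j, u s(i, j) + u s(i, i) := by
  have := sum_wtN n (fun s => u s) i
  simpa [VN] using this

lemma VN_add (u v : Sym2 (Fin n) →₀ ℕ) : VN n (u + v) = VN n u + VN n v := by
  funext i
  simp [VN, add_mul, Finset.sum_add_distrib]

lemma parF_add (u v : Sym2 (Fin n) →₀ ℕ) : parF n (u + v) = parF n u + parF n v := by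
  funext s
  by_cases h : s.IsDiag <;> simp [parF, h]

/-- the fine grading -/
def degH : (Sym2 (Fin n) →₀ ℕ) →+ MM n where
  toFun u := (VN n u, parF n u)
  map_zero' := by
    ext i
    · simp [VN]
    · simp [parF]
  map_add' u v := by rw [VN_add, parF_add]; rfl

lemma degH_apply (u : Sym2 (Fin n) →₀ ℕ) : degH n u = (VN n u, parF n u) := rfl

lemma VN_single (a b i : Fin n) :
    VN n (Finsupp.single s(a, b) 1) i = (if i = a then 1 else 0) + (if i = b then 1 else 0) := by
  classical
  simp only [VN]
  rw [Finset.sum_eq_single s(a, b)]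
  · simp [wtN]
  · intro s _ hs
    simp [Finsupp.single_apply, hs.symm]
  · simp

lemma wtN_sum (s : Sym2 (Fin n)) : ∑ i, wtN n s i = 2 := by
  induction s using Sym2.ind with
  | _ a b => simp [wtN, Finset.sum_add_distrib]

/-- The finite set of parity patterns compatible with Veronese degree `b`. -/
def Good (b : Fin n → ℕ) : Finset (Sym2 (Fin n) → ZMod 2) :=
  Finset.univ.filter fun ε => (∀ i, ε s(i, i) = 0) ∧ ∀ i, ∑ j, ε s(i, j) = (b i : ZMod 2)

lemma mem_Good {b : Fin n → ℕ} {ε : Sym2 (Fin n) → ZMod 2} :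
    ε ∈ Good n b ↔ (∀ i, ε s(i, i) = 0) ∧ ∀ i, ∑ j, ε s(i, j) = (b i : ZMod 2) := by
  simp [Good]

lemma two_eq_zero_zmod : (2 : ZMod 2) = 0 := rfl

lemma parF_good (u : Sym2 (Fin n) →₀ ℕ) : parF n u ∈ Good n (VN n u) := by
  rw [mem_Good]
  refine ⟨fun i => by simp [parF], fun i => ?_⟩
  rw [VN_eq]
  have h : ∀ j, parF n u s(i, j) = (u s(i, j) : ZMod 2) + if j = i then (u s(i, i) : ZMod 2) else 0 := by
    intro j
    by_cases hj : j = i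
    · subst hj
      simp [parF, CharTwo.add_self_eq_zero]
    · simp [parF, hj, Ne.symm hj]
  simp_rw [h]
  simp [Finset.sum_add_distrib]

lemma add_mem_Good {b c : Fin n → ℕ} {ε δ : Sym2 (Fin n) → ZMod 2} (hδ : δ ∈ Good n c) :
    δ + ε ∈ Good n (c + b) ↔ ε ∈ Good n b := by
  rw [mem_Good] at *
  rw [mem_Good]
  simp [Finset.sum_add_distrib, hδ.1, hδ.2]

lemma good_even {b : Fin n → ℕ} {ε : Sym2 (Fin n) → ZMod 2} (h : ε ∈ Good n b) :
    Even (∑ i, b i) := by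
  rw [mem_Good] at h
  rw [← ZMod.natCast_eq_zero_iff_even]
  push_cast
  have h1 : ∀ i, (b i : ZMod 2) = ∑ s, ε s * (wtN n s i : ZMod 2) := by
    intro i
    rw [sum_wtN, h.1, h.2, add_zero]
  simp_rw [h1]
  rw [Finset.sum_comm]
  apply Finset.sum_eq_zero
  intro s _
  rw [← Finset.mul_sum, ← Nat.cast_sum, wtN_sum]
  exact mul_zero _

lemma VN_even (u : Sym2 (Fin n) →₀ ℕ) : Even (∑ i, VN n u i) := good_even n (parF_good n u)

/-- every vector with even sum is a Veronese degree -/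
lemma exists_VN (N : ℕ) : ∀ b : Fin n → ℕ, ∑ i, b i = N → Even N → ∃ u, VN n u = b := by
  induction N using Nat.strong_induction_on with
  | _ N ih =>
    intro b hb hN
    rcases Nat.eq_zero_or_pos N with h0 | hpos
    · refine ⟨0, ?_⟩
      subst h0
      have := (Finset.sum_eq_zero_iff.1 hb)
      funext i
      simp [VN, this i (Finset.mem_univ i)]
    · have h1 : ∃ i, b i ≠ 0 := by
        by_contra hcon
        push Not at hcon
        simp [hcon] at hb
        omega
      obtain ⟨i, hi⟩ := h1
      have e1 : b = Pi.single i 1 + (b - Pi.single i 1) := by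
        funext j
        by_cases hj : j = i
        · subst hj; simp; omega
        · simp [hj]
      set b1 := b - Pi.single i 1 with hb1
      have s1 : ∑ j, b j = 1 + ∑ j, b1 j := by
        conv_lhs => rw [e1]
        simp [Finset.sum_add_distrib]
      have h2 : ∃ j, b1 j ≠ 0 := by
        by_contra hcon
        push Not at hcon
        simp [hcon] at s1
        rw [hb] at s1
        subst s1
        exact absurd hN (by decide)
      obtain ⟨j, hj⟩ := h2
      have e2 : b1 = Pi.single j 1 + (b1 - Pi.single j 1) := by
        funext l
        by_cases hl : l = j
        · subst hl; simp; omega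
        · simp [hl]
      set b2 := b1 - Pi.single j 1 with hb2
      have s2 : ∑ l, b1 l = 1 + ∑ l, b2 l := by
        conv_lhs => rw [e2]
        simp [Finset.sum_add_distrib]
      obtain ⟨u, hu⟩ := ih (∑ l, b2 l) (by omega) b2 rfl (by
        rw [Nat.even_iff] at *; omega)
      refine ⟨Finsupp.single s(i, j) 1 + u, ?_⟩
      rw [VN_add, hu, e1, e2]
      funext l
      simp only [Pi.add_apply, VN_single, Pi.single_apply]
      ring

lemma par_eq (u : Sym2 (Fin n) →₀ ℕ) {i j : Fin n} (h : i ≠ j) :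
    parF n u s(i, j) = (u s(i, j) : ZMod 2) := by simp [parF, h]

/-- reduced exponent vectors are determined by their fine degree -/
lemma red_inj {u v : Sym2 (Fin n) →₀ ℕ} (hu : ∀ s : Sym2 (Fin n), ¬s.IsDiag → u s ≤ 1)
    (hv : ∀ s : Sym2 (Fin n), ¬s.IsDiag → v s ≤ 1) (h : degH n u = degH n v) : u = v := by
  rw [degH_apply, degH_apply, Prod.mk.injEq] at h
  obtain ⟨h1, h2⟩ := h
  have off : ∀ i j : Fin n, i ≠ j → u s(i, j) = v s(i, j) := by
    intro i j hij
    have a := hu s(i, j) (by simpa using hij)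
    have b := hv s(i, j) (by simpa using hij)
    have c := congrFun h2 s(i, j)
    rw [par_eq n u hij, par_eq n v hij, ZMod.natCast_eq_natCast_iff'] at c
    omega
  ext s
  induction s using Sym2.ind with
  | _ i j =>
    by_cases hij : i = j
    · subst hij
      have a := congrFun h1 i
      rw [VN_eq, VN_eq, ← Finset.add_sum_erase _ _ (Finset.mem_univ i),
        ← Finset.add_sum_erase _ (fun j => v s(i, j)) (Finset.mem_univ i)] at a
      have b : ∑ j ∈ Finset.univ.erase i, u s(i, j) = ∑ j ∈ Finset.univ.erase i, v s(i, j) := by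
        apply Finset.sum_congr rfl
        intro j hj
        exact off i j (Finset.ne_of_mem_erase hj).symm
      omega
    · exact off i j hij

/-- existence of a reduced vector of given fine degree -/
lemma exists_red {b : Fin n → ℕ} (hb : ∀ i, n - 2 ≤ b i) {ε : Sym2 (Fin n) → ZMod 2}
    (hε : ε ∈ Good n b) :
    ∃ u : Sym2 (Fin n) →₀ ℕ, (∀ s : Sym2 (Fin n), ¬s.IsDiag → u s ≤ 1) ∧
      degH n u = (b, ε) := by
  rw [mem_Good] at hε
  let D : Fin n → ℕ := fun i => ∑ j ∈ Finset.univ.erase i, (ε s(i, j)).val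
  let f : Sym2 (Fin n) → ℕ := Sym2.lift ⟨fun i j => if i = j then (b i - D i) / 2 else (ε s(i, j)).val,
    fun i j => by
      by_cases h : i = j
      · subst h; rfl
      · simp [h, Ne.symm h, Sym2.eq_swap]⟩
  have fd : ∀ i, f s(i, i) = (b i - D i) / 2 := fun i => by simp [f]
  have fo : ∀ i j, i ≠ j → f s(i, j) = (ε s(i, j)).val := fun i j h => by simp [f, h]
  have hD : ∀ i, D i ≤ b i ∧ D i % 2 = b i % 2 := by
    intro i
    have h1 : D i ≤ n - 1 := by
      calc D i ≤ ∑ j ∈ Finset.univ.erase i, 1 := by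
            apply Finset.sum_le_sum
            intro j _
            have := ZMod.val_lt (ε s(i, j))
            omega
        _ = n - 1 := by simp
    have h2 : D i % 2 = b i % 2 := by
      have := hε.2 i
      rw [← Finset.add_sum_erase _ _ (Finset.mem_univ i), hε.1, zero_add] at this
      apply (ZMod.natCast_eq_natCast_iff' _ _ _).1
      rw [← this]
      simp [D]
    have := hb i
    have := i.isLt
    omega
  refine ⟨Finsupp.equivFunOnFinite.symm f, ?_, ?_⟩
  · intro s
    induction s using Sym2.ind with
    | _ i j =>
      intro h
      rw [Sym2.mk_isDiag_iff] at h
      have := ZMod.val_lt (ε s(i, j))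
      simp only [Finsupp.equivFunOnFinite_symm_apply_apply, fo i j h]
      omega
  · rw [degH_apply, Prod.mk.injEq]
    constructor
    · funext i
      rw [VN_eq, ← Finset.add_sum_erase _ _ (Finset.mem_univ i)]
      simp only [Finsupp.equivFunOnFinite_symm_apply_apply]
      have : ∑ j ∈ Finset.univ.erase i, f s(i, j) = D i := by
        apply Finset.sum_congr rfl
        intro j hj
        exact fo i j (Finset.ne_of_mem_erase hj).symm
      rw [this, fd]
      have := hD i
      omega
    · funext s
      induction s using Sym2.ind with
      | _ i j =>
        by_cases h : i = j
        · subst h; simp [parF, hε.1]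
        · rw [par_eq n _ h]
          simp [fo i j h]

lemma exists_big {b : Fin n → ℕ} (hne : (Good n b).Nonempty) (i : Fin n) :
    ∃ ε ∈ Good n b, n - 2 ≤ (Finset.univ.filter fun j => j ≠ i ∧ ε s(i, j) = 1).card := by
  classical
  obtain ⟨ε, hε, hmax⟩ := Finset.exists_max_image (Good n b)
    (fun ε => (Finset.univ.filter fun j => j ≠ i ∧ ε s(i, j) = 1).card) hne
  refine ⟨ε, hε, ?_⟩
  by_contra hlt
  push Not at hlt
  have hc : 1 < ((Finset.univ.erase i).filter fun j => ¬ ε s(i, j) = 1).card := by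
    have h1 := Finset.card_filter_add_card_filter_not (s := Finset.univ.erase i) (fun j => ε s(i, j) = 1)
    have h2 : (Finset.univ.erase i).filter (fun j => ε s(i, j) = 1) =
        Finset.univ.filter fun j => j ≠ i ∧ ε s(i, j) = 1 := by
      ext j; simp
    rw [h2] at h1
    have h3 : (Finset.univ.erase i).card = n - 1 := by simp
    omega
  obtain ⟨j, hj, l, hl, hjl⟩ := Finset.one_lt_card.1 hc
  simp only [Finset.mem_filter, Finset.mem_erase, Finset.mem_univ, and_true] at hj hl
  have z : ∀ x : ZMod 2, x ≠ 1 → x = 0 := by decide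
  have hj0 := z _ hj.2
  have hl0 := z _ hl.2
  let u : Sym2 (Fin n) →₀ ℕ := Finsupp.single s(i, j) 1 + Finsupp.single s(i, l) 1
    + Finsupp.single s(j, l) 1
  have hu : parF n u ∈ Good n 0 := by
    have h1 := parF_good n u
    rw [mem_Good] at h1 ⊢
    refine ⟨h1.1, fun a => ?_⟩
    rw [h1.2 a]
    simp only [u, VN_add, Pi.add_apply, VN_single]
    rw [ZMod.natCast_eq_natCast_iff']
    simp only [Pi.zero_apply]
    split_ifs <;> omega
  have hmem : parF n u + ε ∈ Good n b := by
    have := (add_mem_Good n (b := b) (ε := ε) hu).2 hε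
    simpa using this
  have hlt2 := hmax _ hmem
  have h4 : (Finset.univ.filter fun j => j ≠ i ∧ ε s(i, j) = 1) ⊂
      (Finset.univ.filter fun j => j ≠ i ∧ (parF n u + ε) s(i, j) = 1) := by
    rw [Finset.ssubset_iff_of_subset]
    · refine ⟨j, ?_, ?_⟩
      · simp only [Finset.mem_filter, Finset.mem_univ, true_and, Pi.add_apply]
        refine ⟨hj.1, ?_⟩
        rw [hj0, par_eq n u hj.1.symm]
        simp [u, Finsupp.single_apply, hjl, hjl.symm, hj.1, hj.1.symm, hl.1, hl.1.symm]
      · simp [hj0]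
    · intro a
      simp only [Finset.mem_filter, Finset.mem_univ, true_and, Pi.add_apply]
      rintro ⟨h1, h2⟩
      refine ⟨h1, ?_⟩
      have haj : a ≠ j := by rintro rfl; exact hj.2 h2
      have hal : a ≠ l := by rintro rfl; exact hl.2 h2
      rw [h2, par_eq n u h1.symm]
      simp [u, Finsupp.single_apply, haj, haj.symm, hal, hal.symm, hj.1, hl.1, h1.symm]
  have := Finset.card_lt_card h4
  omega

/-- The fine grading homomorphism to the monoid algebra. -/
noncomputable def phi : R n k →ₐ[k] AddMonoidAlgebra k (MM n) :=
  AddMonoidAlgebra.mapDomainAlgHom k k (degH n)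

lemma phi_monomial (u : Sym2 (Fin n) →₀ ℕ) (a : k) :
    phi n k (monomial u a) = AddMonoidAlgebra.single (degH n u) a := by
  exact AddMonoidAlgebra.mapDomain_single

lemma phi_apply (f : R n k) : phi n k f = AddMonoidAlgebra.mapDomain (degH n) f := rfl

lemma X_mul_X (s t : Sym2 (Fin n)) :
    (X s * X t : R n k) = monomial (Finsupp.single s 1 + Finsupp.single t 1) 1 := by
  simp [X, monomial_mul]

lemma deg_swap {i j : Fin n} (h : i ≠ j) :
    degH n (Finsupp.single s(i, i) 1 + Finsupp.single s(j, j) 1) =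
    degH n (Finsupp.single s(i, j) 1 + Finsupp.single s(i, j) 1) := by
  rw [degH_apply, degH_apply, Prod.mk.injEq]
  constructor
  · funext l
    simp only [VN_add, Pi.add_apply, VN_single]
    ring
  · rw [parF_add, parF_add]
    funext s
    simp only [Pi.add_apply, CharTwo.add_self_eq_zero]
    have : ∀ a : Fin n, parF n (Finsupp.single s(a, a) 1) s = 0 := by
      intro a
      by_cases hs : s.IsDiag
      · simp [parF, hs]
      · have : s(a, a) ≠ s := by rintro rfl; simp at hs
        simp [parF, hs, this]
    rw [this, this, add_zero]

lemma phi_J {f : R n k} (hf : f ∈ Jideal n k) : phi n k f = 0 := by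
  have : Jideal n k ≤ RingHom.ker (phi n k) := by
    rw [Jideal, Ideal.span_le]
    rintro f ⟨i, j, hij, rfl⟩
    simp only [SetLike.mem_coe, RingHom.mem_ker]
    rw [sq, X_mul_X, X_mul_X, map_sub, phi_monomial, phi_monomial, deg_swap n hij.ne, sub_self]
  exact this hf

lemma J_swap {i j : Fin n} (h : i ≠ j) : (X s(i, i) * X s(j, j) - X s(i, j) ^ 2 : R n k) ∈ Jideal n k := by
  rcases lt_or_gt_of_ne h with h | h
  · exact Ideal.subset_span ⟨i, j, h, rfl⟩
  · exact Ideal.subset_span ⟨j, i, h, by rw [Sym2.eq_swap (a := i) (b := j)]; ring⟩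

/-- reduction of monomials modulo `J` -/
lemma exists_reduce (N : ℕ) : ∀ u : Sym2 (Fin n) →₀ ℕ,
    (∑ s ∈ Finset.univ.filter (fun s : Sym2 (Fin n) => ¬ s.IsDiag), u s) = N →
    ∃ v : Sym2 (Fin n) →₀ ℕ, (∀ s : Sym2 (Fin n), ¬s.IsDiag → v s ≤ 1) ∧ degH n v = degH n u ∧
      (monomial u 1 - monomial v 1 : R n k) ∈ Jideal n k := by
  induction N using Nat.strong_induction_on with
  | _ N ih =>
    intro u hu
    by_cases hr : ∀ s : Sym2 (Fin n), ¬s.IsDiag → u s ≤ 1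
    · exact ⟨u, hr, rfl, by simp⟩
    · push Not at hr
      obtain ⟨s, hs, h2⟩ := hr
      induction s using Sym2.ind with
      | _ i j =>
        have hij : i ≠ j := by simpa using hs
        let w := u - (Finsupp.single s(i, j) 1 + Finsupp.single s(i, j) 1)
        have hw : u = (Finsupp.single s(i, j) 1 + Finsupp.single s(i, j) 1) + w := by
          ext t
          by_cases ht : s(i, j) = t
          · subst ht; simp [w]; omega
          · simp [w, ht]
        let u' := (Finsupp.single s(i, i) 1 + Finsupp.single s(j, j) 1) + w
        have hdeg : degH n u' = degH n u := by
          rw [hw, (degH n).map_add _ w, (degH n).map_add _ w, deg_swap n hij]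
        have hlt : (∑ s ∈ Finset.univ.filter (fun s : Sym2 (Fin n) => ¬ s.IsDiag), u' s) < N := by
          rw [← hu]
          apply Finset.sum_lt_sum
          · intro t ht
            simp only [Finset.mem_filter, Finset.mem_univ, true_and] at ht
            have h1 : ∀ a, s(a, a) ≠ t := by rintro a rfl; simp at ht
            simp [u', h1, w]
          · refine ⟨s(i, j), by simpa using hij, ?_⟩
            have h1 : ∀ a, s(a, a) ≠ s(i, j) := by
              intro a h; apply hs; rw [← h]; simp
            simp [u', w, h1]
            omega
        obtain ⟨v, hv1, hv2, hv3⟩ := ih _ hlt u' rfl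
        refine ⟨v, hv1, hv2.trans hdeg, ?_⟩
        have h3 : (monomial u 1 - monomial u' 1 : R n k) ∈ Jideal n k := by
          have h4 : (monomial u 1 - monomial u' 1 : R n k) =
              -(monomial w 1) * (X s(i, i) * X s(j, j) - X s(i, j) ^ 2) := by
            rw [sq, X_mul_X, X_mul_X, neg_mul, mul_sub, monomial_mul, monomial_mul, one_mul, neg_sub,
              add_comm w, add_comm w, ← hw]
          rw [h4]
          exact Ideal.mul_mem_left _ _ (J_swap n k hij)
        have := Ideal.add_mem _ h3 hv3
        simpa using this

lemma ker_phi {f : R n k} (hf : phi n k f = 0) : f ∈ Jideal n k := by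
  classical
  let τ : MM n → (Sym2 (Fin n) →₀ ℕ) := fun w =>
    if h : ∃ v : Sym2 (Fin n) →₀ ℕ, (∀ s : Sym2 (Fin n), ¬s.IsDiag → v s ≤ 1) ∧ degH n v = w
    then h.choose else 0
  have hτ : ∀ u, (monomial u 1 - monomial (τ (degH n u)) 1 : R n k) ∈ Jideal n k := by
    intro u
    obtain ⟨v, h1, h2, h3⟩ := exists_reduce n k _ u rfl
    have h : ∃ v : Sym2 (Fin n) →₀ ℕ, (∀ s : Sym2 (Fin n), ¬s.IsDiag → v s ≤ 1) ∧
      degH n v = degH n u := ⟨v, h1, h2⟩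
    have e1 : τ (degH n u) = v := by
      simp only [τ, dif_pos h]
      exact red_inj n h.choose_spec.1 h1 (h.choose_spec.2.trans h2.symm)
    rw [e1]; exact h3
  have key : ∀ g : R n k, g - AddMonoidAlgebra.mapDomain τ (phi n k g) ∈ Jideal n k := by
    intro g
    induction g using MvPolynomial.induction_on' with
    | monomial u a =>
      rw [phi_monomial, AddMonoidAlgebra.mapDomain_single, single_eq_monomial]
      have := Ideal.mul_mem_left _ (C a) (hτ u)
      rw [mul_sub, C_mul_monomial, C_mul_monomial, mul_one] at this
      exact this
    | add p q hp hq =>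
      rw [map_add, AddMonoidAlgebra.mapDomain_add]
      have := Ideal.add_mem _ hp hq
      convert this using 1
      ring
  have := key f
  rw [hf, AddMonoidAlgebra.mapDomain_zero, sub_zero] at this
  exact this

lemma sub_mem_J {f g : R n k} (h : phi n k f = phi n k g) : f - g ∈ Jideal n k :=
  ker_phi n k (by rw [map_sub, h, sub_self])

/-- sum of all elements of fine degree over `b` -/
noncomputable def Nel (b : Fin n → ℕ) : AddMonoidAlgebra k (MM n) :=
  ∑ ε ∈ Good n b, AddMonoidAlgebra.single (b, ε) 1

lemma coeff_Nel (b b' : Fin n → ℕ) (ε : Sym2 (Fin n) → ZMod 2) :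
    (Nel n k b).coeff (b', ε) = if b = b' ∧ ε ∈ Good n b then 1 else 0 := by
  classical
  rw [Nel, AddMonoidAlgebra.coeff_sum, Finsupp.finsetSum_apply]
  simp only [AddMonoidAlgebra.coeff_single, Finsupp.single_apply, Prod.mk.injEq]
  by_cases hb : b = b'
  · simp [hb]
  · simp [hb]

lemma phi_mul_Nel (u : Sym2 (Fin n) →₀ ℕ) (b : Fin n → ℕ) :
    phi n k (monomial u 1) * Nel n k b = Nel n k (VN n u + b) := by
  rw [phi_monomial, Nel, Nel, Finset.mul_sum]
  apply Finset.sum_bij (fun ε _ => parF n u + ε)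
  · intro ε hε
    exact (add_mem_Good n (parF_good n u)).2 hε
  · intro a _ b _ h
    exact add_left_cancel h
  · intro ε hε
    refine ⟨ε - parF n u, ?_, by simp⟩
    rw [← add_mem_Good n (parF_good n u)]
    simpa using hε
  · intro ε _
    rw [AddMonoidAlgebra.single_mul_single, one_mul]
    rfl

lemma phi_pplusAt {b : Fin n → ℕ} (hb : ∀ i, n - 2 ≤ b i) : phi n k (pplusAt n k b) = Nel n k b := by
  classical
  rw [pplusAt, map_sum, Nel]
  have hm : ∀ u, u ∈ (fiberFinset n b).filter
      (fun u => ∀ s : Sym2 (Fin n), ¬s.IsDiag → u s ≤ 1) ↔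
      VN n u = b ∧ ∀ s : Sym2 (Fin n), ¬s.IsDiag → u s ≤ 1 := by
    intro u
    simp [fiberFinset, fiber]
  apply Finset.sum_bij (fun u _ => parF n u)
  · intro u hu
    rw [← ((hm u).1 hu).1]
    exact parF_good n u
  · intro u hu v hv h
    have hu := (hm u).1 hu
    have hv := (hm v).1 hv
    apply red_inj n hu.2 hv.2
    rw [degH_apply, degH_apply, hu.1, hv.1, h]
  · intro ε hε
    obtain ⟨u, h1, h2⟩ := exists_red n hb hε
    rw [degH_apply, Prod.mk.injEq] at h2
    exact ⟨u, (hm u).2 ⟨h2.1, h1⟩, h2.2⟩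
  · intro u hu
    rw [phi_monomial, degH_apply, ((hm u).1 hu).1]

lemma good_ext {b : Fin n → ℕ} {ε δ : Sym2 (Fin n) → ZMod 2} (hε : ε ∈ Good n b)
    (hδ : δ ∈ Good n b) (l : Fin n)
    (h : ∀ i j, i ≠ l → j ≠ l → i ≠ j → ε s(i, j) = δ s(i, j)) : ε = δ := by
  rw [mem_Good] at hε hδ
  have hl : ∀ i, i ≠ l → ε s(i, l) = δ s(i, l) := by
    intro i hi
    have h1 := (hε.2 i).trans (hδ.2 i).symm
    rw [← Finset.add_sum_erase _ _ (Finset.mem_univ l),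
      ← Finset.add_sum_erase _ (fun j => δ s(i, j)) (Finset.mem_univ l)] at h1
    have h2 : ∑ j ∈ Finset.univ.erase l, ε s(i, j) = ∑ j ∈ Finset.univ.erase l, δ s(i, j) := by
      apply Finset.sum_congr rfl
      intro j hj
      by_cases hij : i = j
      · subst hij; rw [hε.1, hδ.1]
      · exact h i j hi (Finset.ne_of_mem_erase hj) hij
    rw [h2] at h1
    exact add_right_cancel h1
  funext s
  induction s using Sym2.ind with
  | _ i j =>
    by_cases hij : i = j
    · subst hij; rw [hε.1, hδ.1]
    · by_cases hi : i = l
      · subst hi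
        rw [Sym2.eq_swap]
        exact hl j (Ne.symm hij)
      · by_cases hj : j = l
        · subst hj
          exact hl i hi
        · exact h i j hi hj hij

lemma phi_pn (hn : 0 < n) : ∃ b : Fin n → ℕ, Even (∑ i, b i) ∧ phi n k (pn n k hn) = Nel n k b := by
  classical
  set L := lastIdx n hn with hL
  let P := Finset.univ.filter (fun p : Fin (n - 1) × Fin (n - 1) => p.1 < p.2)
  let a : Fin (n - 1) × Fin (n - 1) → (Sym2 (Fin n) →₀ ℕ) := fun p =>
    Finsupp.single s(ι n p.1, ι n p.2) 1 + Finsupp.single s(L, L) 1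
  let b : Fin (n - 1) × Fin (n - 1) → (Sym2 (Fin n) →₀ ℕ) := fun p =>
    Finsupp.single s(ι n p.1, L) 1 + Finsupp.single s(ι n p.2, L) 1
  let w : Finset (Fin (n - 1) × Fin (n - 1)) → (Sym2 (Fin n) →₀ ℕ) := fun T =>
    ∑ p ∈ T, a p + ∑ p ∈ P \ T, b p
  have hpn : pn n k hn = ∑ T ∈ P.powerset, monomial (w T) 1 := by
    have : pn n k hn = ∏ p ∈ P, (monomial (a p) 1 + monomial (b p) 1) := by
      simp only [pn, X_mul_X]
      rfl
    rw [this, Finset.prod_add]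
    apply Finset.sum_congr rfl
    intro T _
    rw [← monomial_sum_one, ← monomial_sum_one, monomial_mul, one_mul]
  let VH : (Sym2 (Fin n) →₀ ℕ) →+ (Fin n → ℕ) := (AddMonoidHom.fst _ _).comp (degH n)
  have hVH : ∀ u, VH u = VN n u := fun u => rfl
  have hab : ∀ p, VH (a p) = VH (b p) := by
    intro p
    rw [hVH, hVH]
    funext l
    simp only [a, b, VN_add, Pi.add_apply, VN_single]
    ring
  have hVw : ∀ T ∈ P.powerset, VN n (w T) = VN n (w P) := by
    intro T hT
    rw [Finset.mem_powerset] at hT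
    rw [← hVH, ← hVH]
    simp only [w, map_add, map_sum, ← hab]
    rw [add_comm, Finset.sum_sdiff hT]
    simp
  have hιL : ∀ i, ι n i ≠ L := by
    intro i h
    have := congrArg Fin.val h
    simp only [ι, hL, lastIdx, Fin.val_castLE] at this
    have := i.isLt
    omega
  have hι : Function.Injective (ι n) := Fin.castLE_injective _
  have hval : ∀ T ∈ P.powerset, ∀ i j, i < j →
      parF n (w T) s(ι n i, ι n j) = if (i, j) ∈ T then 1 else 0 := by
    intro T hT i j hij
    rw [Finset.mem_powerset] at hT
    rw [par_eq n _ (fun h => hij.ne (hι h))]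
    have e1 : ∀ p ∈ T, a p s(ι n i, ι n j) = if p = (i, j) then 1 else 0 := by
      intro p hp
      have hp := hT hp
      simp only [P, Finset.mem_filter, Finset.mem_univ, true_and] at hp
      have h1 : s(L, L) ≠ s(ι n i, ι n j) := by
        simp [(hιL i).symm]
      simp only [a, Finsupp.add_apply, Finsupp.single_apply, h1, if_false, add_zero]
      congr 1
      rw [Sym2.eq_iff, Prod.ext_iff]
      simp only [hι.eq_iff, eq_iff_iff]
      constructor
      · rintro (h | ⟨h1, h2⟩)
        · exact h
        · rw [h1, h2] at hp
          exact absurd hij hp.asymm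
      · exact Or.inl
    have e2 : ∀ p ∈ P \ T, b p s(ι n i, ι n j) = 0 := by
      intro p _
      simp [b, Finsupp.single_apply, (hιL i).symm, (hιL j).symm]
    simp only [w, Finsupp.add_apply, Finsupp.finsetSum_apply]
    rw [Finset.sum_congr rfl e1, Finset.sum_congr rfl e2]
    simp
  refine ⟨VN n (w P), VN_even n _, ?_⟩
  rw [hpn, map_sum, Nel]
  apply Finset.sum_bij (fun T _ => parF n (w T))
  · intro T hT
    rw [← hVw T hT]
    exact parF_good n _
  · intro T hT T' hT' h
    have h0 := hT
    have h0' := hT'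
    rw [Finset.mem_powerset] at h0 h0'
    ext ⟨i, j⟩
    by_cases hij : i < j
    · have := congrFun h s(ι n i, ι n j)
      rw [hval T hT i j hij, hval T' hT' i j hij] at this
      by_cases h1 : (i, j) ∈ T <;> by_cases h2 : (i, j) ∈ T' <;> simp_all
    · constructor
      · intro h1; exact absurd (by simpa [P] using h0 h1) hij
      · intro h1; exact absurd (by simpa [P] using h0' h1) hij
  · intro ε hε
    have hT : P.filter (fun p => ε s(ι n p.1, ι n p.2) = 1) ∈ P.powerset := by
      rw [Finset.mem_powerset]; exact Finset.filter_subset _ _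
    refine ⟨P.filter (fun p => ε s(ι n p.1, ι n p.2) = 1), hT, ?_⟩
    have hlt : ∀ i j, i < j → parF n (w (P.filter (fun p => ε s(ι n p.1, ι n p.2) = 1)))
        s(ι n i, ι n j) = ε s(ι n i, ι n j) := by
      intro i j hij
      rw [hval _ hT i j hij]
      have z : ∀ x : ZMod 2, (if x = 1 then 1 else 0) = x := by decide
      simp only [P, Finset.mem_filter, Finset.mem_univ, true_and, hij]
      exact z _
    apply good_ext n (b := VN n (w P)) _ hε L
    · intro i j hi hj hij
      have hsurj : ∀ i : Fin n, i ≠ L → ∃ i', ι n i' = i := by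
        intro i hi
        have h1 : (i : ℕ) ≠ n - 1 := fun h => hi (Fin.ext h)
        have h2 := i.isLt
        exact ⟨⟨i, by omega⟩, by ext; simp [ι]⟩
      obtain ⟨i, rfl⟩ := hsurj i hi
      obtain ⟨j, rfl⟩ := hsurj j hj
      have hne : i ≠ j := fun h => hij (by rw [h])
      rcases lt_or_gt_of_ne hne with h | h
      · exact hlt i j h
      · rw [Sym2.eq_swap]
        exact hlt j i h
    · rw [← hVw _ hT]
      exact parF_good n _
  · intro T hT
    rw [phi_monomial, degH_apply, hVw T hT]

lemma bsel_ge (j : Fin n) (i : Fin n) : n - 2 ≤ bsel n j i := by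
  unfold bsel; split_ifs <;> omega

lemma bsel_even (hn : 3 ≤ n) (j : Fin n) : Even (∑ i, bsel n j i) := by
  rcases Nat.mod_two_eq_zero_or_one n with h | h
  · simp only [bsel, h]
    simp only [zero_ne_one, if_false, Finset.sum_const, Finset.card_univ, Fintype.card_fin, smul_eq_mul]
    exact (Nat.even_iff.2 h).mul_right _
  · simp only [bsel, h, if_true, Finset.sum_add_distrib, Finset.sum_const, Finset.card_univ,
      Fintype.card_fin, smul_eq_mul, Finset.sum_ite_eq', Finset.mem_univ]
    have h3 : Odd (n * (n - 2)) := by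
      rw [Nat.odd_mul]
      constructor <;> rw [Nat.odd_iff] <;> omega
    exact h3.add_one

/-- elements of the monoid algebra constant along Veronese fibers -/
def Inv2 (F : AddMonoidAlgebra k (MM n)) : Prop :=
  ∀ b ε, (ε ∉ Good n b → F.coeff (b, ε) = 0) ∧
    ∀ δ, ε ∈ Good n b → δ ∈ Good n b → F.coeff (b, δ) = F.coeff (b, ε)

lemma Inv2_Nel (b : Fin n → ℕ) (a : k) : Inv2 n k (a • Nel n k b) := by
  intro b' ε
  refine ⟨fun h => ?_, fun δ h1 h2 => ?_⟩
  · rw [AddMonoidAlgebra.coeff_smul_apply, coeff_Nel, if_neg, smul_zero]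
    rintro ⟨rfl, h'⟩
    exact h h'
  · rw [AddMonoidAlgebra.coeff_smul_apply, AddMonoidAlgebra.coeff_smul_apply, coeff_Nel, coeff_Nel]
    by_cases hb : b = b'
    · subst hb; simp [h1, h2]
    · simp [hb]

lemma invariant_mul (h : R n k) (b0 : Fin n → ℕ) : Inv2 n k (phi n k h * Nel n k b0) := by
  induction h using MvPolynomial.induction_on' with
  | monomial u a =>
    have : (monomial u a : R n k) = a • monomial u 1 := by simp [smul_monomial]
    rw [this, map_smul, smul_mul_assoc, phi_mul_Nel]
    exact Inv2_Nel n k _ a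
  | add p q hp hq =>
    rw [map_add, add_mul]
    intro b ε
    simp only [AddMonoidAlgebra.coeff_add, Finsupp.add_apply]
    refine ⟨fun h => ?_, fun δ h1 h2 => ?_⟩
    · rw [(hp b ε).1 h, (hq b ε).1 h, add_zero]
    · rw [(hp b ε).2 δ h1 h2, (hq b ε).2 δ h1 h2]

lemma invariant_of_mul (u : Sym2 (Fin n) →₀ ℕ) {F : AddMonoidAlgebra k (MM n)}
    (h : Inv2 n k (phi n k (monomial u 1) * F)) : Inv2 n k F := by
  have hc : ∀ b ε, (phi n k (monomial u 1) * F).coeff (VN n u + b, parF n u + ε) = F.coeff (b, ε) := by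
    intro b ε
    rw [phi_monomial]
    rw [AddMonoidAlgebra.coeff_single_mul_eq_mul_coeff (b, ε), one_mul]
    rintro w _
    rw [show ((VN n u + b, parF n u + ε) : MM n) = degH n u + (b, ε) from rfl]
    exact add_right_inj _
  intro b ε
  have := h (VN n u + b) (parF n u + ε)
  rw [add_mem_Good n (parF_good n u), hc] at this
  refine ⟨this.1, fun δ h1 h2 => ?_⟩
  rw [← this.2 (parF n u + δ) h1 ((add_mem_Good n (parF_good n u)).2 h2), hc]

lemma phi_support {g : R n k} {w : MM n} (h : (phi n k g).coeff w ≠ 0) : ∃ u, degH n u = w := by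
  classical
  by_contra hcon
  push Not at hcon
  apply h
  clear h
  induction g using MvPolynomial.induction_on' with
  | monomial u a =>
    rw [phi_monomial, AddMonoidAlgebra.coeff_single, Finsupp.single_apply, if_neg (hcon u)]
  | add p q hp hq =>
    rw [map_add, AddMonoidAlgebra.coeff_add, Finsupp.add_apply, hp, hq, add_zero]

lemma pplusAt_mem (hn : 3 ≤ n) {b : Fin n → ℕ} (hb : ∀ i, n - 2 ≤ b i) (he : Even (∑ i, b i)) :
    pplusAt n k b ∈ Jideal n k + Ideal.span (Set.range (pplus n k)) := by
  classical
  have hj : ∃ j, ∀ i, bsel n j i ≤ b i := by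
    rcases Nat.mod_two_eq_zero_or_one n with h | h
    · exact ⟨⟨0, by omega⟩, fun i => by simpa [bsel, h] using hb i⟩
    · have : ∃ j, n - 2 < b j := by
        by_contra hcon
        push Not at hcon
        have : ∀ i, b i = n - 2 := fun i => le_antisymm (hcon i) (hb i)
        simp [this] at he
        have h3 : Odd (n * (n - 2)) := by
          rw [Nat.odd_mul]
          constructor <;> rw [Nat.odd_iff] <;> omega
        rw [Nat.even_mul] at he
        rw [Nat.even_iff, Nat.even_iff] at he
        omega
      obtain ⟨j, hj⟩ := this
      refine ⟨j, fun i => ?_⟩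
      have := hb i
      simp only [bsel, h, if_true]
      by_cases hij : i = j
      · subst hij; simp; omega
      · simp [hij]; omega
  obtain ⟨j, hj⟩ := hj
  obtain ⟨u, hu⟩ := exists_VN n _ (fun i => b i - bsel n j i) rfl (by
    have h1 : ∑ i, (b i - bsel n j i) + ∑ i, bsel n j i = ∑ i, b i := by
      rw [← Finset.sum_add_distrib]
      apply Finset.sum_congr rfl
      intro i _
      have := hj i
      omega
    have h3 := bsel_even n hn j
    rw [Nat.even_iff] at *
    omega)
  have h5 : (pplusAt n k b - monomial u 1 * pplus n k j : R n k) ∈ Jideal n k := by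
    apply sub_mem_J
    rw [map_mul, pplus, phi_pplusAt n k (bsel_ge n j), phi_mul_Nel, phi_pplusAt n k hb]
    congr 1
    funext i
    have := hj i
    simp only [Pi.add_apply, hu]
    omega
  have h6 : monomial u 1 * pplus n k j ∈ Ideal.span (Set.range (pplus n k)) :=
    Ideal.mul_mem_left _ _ (Ideal.subset_span ⟨j, rfl⟩)
  have h7 : pplusAt n k b = (pplusAt n k b - monomial u 1 * pplus n k j) + monomial u 1 * pplus n k j := by
    ring
  rw [h7]
  exact Submodule.add_mem_sup h5 h6

lemma mem_of_invariant (hn : 3 ≤ n) {g : R n k} (h : Inv2 n k (phi n k g)) :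
    g ∈ Jideal n k + Ideal.span (Set.range (pplus n k)) := by
  classical
  set F := phi n k g with hF
  let B : Finset (Fin n → ℕ) := F.coeff.support.image Prod.fst
  have hB : ∀ b ∈ B, ∃ ε ∈ Good n b, F.coeff (b, ε) ≠ 0 := by
    intro b hb
    obtain ⟨⟨b', ε⟩, h1, rfl⟩ := Finset.mem_image.1 hb
    have h2 := Finsupp.mem_support_iff.1 h1
    refine ⟨ε, ?_, h2⟩
    by_contra hcon
    exact h2 ((h b' ε).1 hcon)
  have hge : ∀ b ∈ B, (∀ i, n - 2 ≤ b i) ∧ Even (∑ i, b i) := by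
    intro b hb
    obtain ⟨ε, hε, hne⟩ := hB b hb
    refine ⟨fun i => ?_, good_even n hε⟩
    obtain ⟨δ, hδ, hcard⟩ := exists_big n ⟨ε, hε⟩ i
    have h1 : F.coeff (b, δ) ≠ 0 := by rwa [(h b ε).2 δ hε hδ]
    obtain ⟨u, hu⟩ := phi_support n k h1
    rw [degH_apply, Prod.mk.injEq] at hu
    refine hcard.trans ?_
    rw [← hu.1, VN_eq, Finset.card_eq_sum_ones]
    refine le_trans ?_ (Nat.le_add_right _ _)
    refine le_trans ?_ (Finset.sum_le_sum_of_subset (f := fun j => u s(i, j)) (Finset.subset_univ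
      (Finset.univ.filter fun j => j ≠ i ∧ δ s(i, j) = 1)))
    apply Finset.sum_le_sum
    intro j hj
    simp only [Finset.mem_filter, Finset.mem_univ, true_and] at hj
    have h3 := hj.2
    rw [← hu.2, par_eq n u hj.1.symm] at h3
    by_contra hcon
    have : u s(i, j) = 0 := by omega
    simp [this] at h3
  let c : (Fin n → ℕ) → k := fun b =>
    if hb : b ∈ B then F.coeff (b, (hB b hb).choose) else 0
  have hc : ∀ b ∈ B, ∀ ε ∈ Good n b, F.coeff (b, ε) = c b := by
    intro b hb ε hε
    simp only [c, dif_pos hb]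
    exact (h b _).2 ε (hB b hb).choose_spec.1 hε
  have hFs : F = phi n k (∑ b ∈ B, c b • pplusAt n k b) := by
    rw [map_sum]
    have : ∀ b ∈ B, phi n k (c b • pplusAt n k b) = c b • Nel n k b := by
      intro b hb
      rw [map_smul, phi_pplusAt n k (hge b hb).1]
    rw [Finset.sum_congr rfl this]
    apply AddMonoidAlgebra.ext
    ext ⟨b, ε⟩
    rw [AddMonoidAlgebra.coeff_sum, Finsupp.finsetSum_apply]
    simp only [AddMonoidAlgebra.coeff_smul_apply, coeff_Nel]
    by_cases hε : ε ∈ Good n b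
    · by_cases hb : b ∈ B
      · rw [Finset.sum_eq_single b, hc b hb ε hε]
        · simp [hε]
        · intro b' _ hb'
          simp [hb']
        · intro h; exact absurd hb h
      · rw [Finset.sum_eq_zero]
        · by_contra hcon
          exact hb (Finset.mem_image.2 ⟨(b, ε), Finsupp.mem_support_iff.2 hcon, rfl⟩)
        · intro b' hb'
          have : b' ≠ b := by rintro rfl; exact hb hb'
          simp [this]
    · rw [(h b ε).1 hε, Finset.sum_eq_zero]
      intro b' _
      rw [if_neg, smul_zero]
      rintro ⟨rfl, h'⟩
      exact hε h'
  have h1 := sub_mem_J n k hFs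
  have h2 : ∑ b ∈ B, c b • pplusAt n k b ∈ Jideal n k + Ideal.span (Set.range (pplus n k)) := by
    apply Ideal.sum_mem
    intro b hb
    rw [smul_eq_C_mul]
    exact Ideal.mul_mem_left _ _ (pplusAt_mem n k hn (hge b hb).1 (hge b hb).2)
  have h3 := Ideal.add_mem _ ((le_sup_left : Jideal n k ≤ Jideal n k + Ideal.span (Set.range (pplus n k))) h1) h2
  simpa using h3

/-- The saturation of `J_n + ⟨p_n⟩` with respect to the product of
all variables is `J_n + ⟨p⁺_{n,1}, …, p⁺_{n,n}⟩` (a single generator `p⁺_n` for even `n`). -/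
theorem saturation_of_pn (n : ℕ) (hn : 3 ≤ n) (k : Type*) [Field k] :
    {g : R n k | ∃ m : ℕ,
        (∏ s : Sym2 (Fin n), X s) ^ m * g ∈
          Jideal n k + Ideal.span {pn n k (by omega)}} =
      ↑(Jideal n k + Ideal.span (Set.range (pplus n k))) := by
  classical
  obtain ⟨b0, hb0, hpn⟩ := phi_pn n k (by omega)
  have hQ : (∏ s : Sym2 (Fin n), X s : R n k) = monomial (∑ s, Finsupp.single s 1) 1 := by
    rw [monomial_sum_one]; rfl
  set q : Sym2 (Fin n) →₀ ℕ := ∑ s, Finsupp.single s 1 with hq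
  have hQm : ∀ m : ℕ, (∏ s : Sym2 (Fin n), X s : R n k) ^ m = monomial (m • q) 1 := by
    intro m
    rw [hQ, monomial_pow, one_pow]
  ext g
  simp only [Set.mem_ofPred_eq, SetLike.mem_coe]
  constructor
  · rintro ⟨m, hm⟩
    rw [hQm] at hm
    obtain ⟨f, hf, f', hf', hsum⟩ := Submodule.mem_sup.1 hm
    obtain ⟨h, rfl⟩ := Ideal.mem_span_singleton'.1 hf'
    have e1 : phi n k (monomial (m • q) 1) * phi n k g = phi n k h * Nel n k b0 := by
      rw [← map_mul, ← hsum, map_add, phi_J n k hf, zero_add, map_mul, hpn]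
    apply mem_of_invariant n k hn
    apply invariant_of_mul n k (m • q)
    rw [e1]
    exact invariant_mul n k h b0
  · intro hg
    obtain ⟨f, hf, f', hf', rfl⟩ := Submodule.mem_sup.1 hg
    let I := Jideal n k + Ideal.span {pn n k (by omega)}
    have hJ : Jideal n k ≤ I := le_sup_left
    refine ⟨∑ i, b0 i, ?_⟩
    rw [mul_add]
    refine Ideal.add_mem _ (Ideal.mul_mem_left _ _ (hJ hf)) ?_
    rw [hQm]
    set m := ∑ i, b0 i with hm
    have hle : Ideal.span (Set.range (pplus n k)) ≤ I.colon {monomial (m • q) (1 : k)} := by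
      rw [Ideal.span_le]
      rintro _ ⟨j, rfl⟩
      rw [SetLike.mem_coe, Submodule.mem_colon_singleton, smul_eq_mul, mul_comm]
      have hle0 : ∀ i, b0 i ≤ VN n (m • q) i + bsel n j i := by
        intro i
        have h1 : b0 i ≤ m := Finset.single_le_sum (f := b0) (fun _ _ => Nat.zero_le _) (Finset.mem_univ i)
        have h2 : m ≤ VN n (m • q) i := by
          rw [VN_eq]
          have : (m • q) s(i, i) = m := by
            simp [q, Finsupp.finsetSum_apply, Finsupp.single_apply]
          omega
        omega
      obtain ⟨u, hu⟩ := exists_VN n _ (fun i => VN n (m • q) i + bsel n j i - b0 i) rfl (by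
        have h1 : ∑ i, (VN n (m • q) i + bsel n j i - b0 i) + ∑ i, b0 i =
            ∑ i, VN n (m • q) i + ∑ i, bsel n j i := by
          rw [← Finset.sum_add_distrib, ← Finset.sum_add_distrib]
          apply Finset.sum_congr rfl
          intro i _
          have := hle0 i
          omega
        have h2 := VN_even n (m • q)
        have h3 := bsel_even n hn j
        rw [Nat.even_iff] at *
        omega)
      have h5 : (monomial (m • q) 1 * pplus n k j - monomial u 1 * pn n k (by omega) : R n k) ∈
          Jideal n k := by
        apply sub_mem_J
        rw [map_mul, map_mul, hpn, pplus, phi_pplusAt n k (bsel_ge n j), phi_mul_Nel, phi_mul_Nel]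
        congr 1
        funext i
        have := hle0 i
        simp only [Pi.add_apply, hu]
        omega
      have h6 : monomial u 1 * pn n k (by omega) ∈ I :=
        Ideal.mul_mem_left _ _ ((le_sup_right : _ ≤ I) (Ideal.mem_span_singleton_self _))
      have := Ideal.add_mem _ (hJ h5) h6
      simpa using this
    have := hle hf'
    rw [Submodule.mem_colon_singleton, smul_eq_mul, mul_comm] at this
    exact this

end Veronese
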